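/- arXiv:1704.05936 — 5 statements merged into one kernel-verified Lean document; each statement's English description precedes it below -/
import Mathlib

section
/- Let n ≥ 3 be an integer, σ > 0, and let φ_{(1,2)},…,φ_{(n−1,n)}: ℝ → ℝ be continuous functions satisfying φ_{(i,i+1)}(s) ≥ σ for all s ∈ ℝ and 1 ≤ i ≤ n−1, and suppose there exist positive constants ρ̄_i, ρ̲_i such that ρ̄_i φ_{(i−1,i)}(s) ≤ φ_{(i,i+1)}(s) ≤ ρ̲_i φ_{(i−1,i)}(s) for all s ∈ ℝ and 3 ≤ i ≤ n−1. Then there exist a symmetric positive-definite real (n−1)×(n−1) matrix P_o, positive constants ν_o, ν̃_o, ν̲_o, ν̄_o, ḡ, and continuous functions g₂,…,g_n: ℝ → ℝ such that for all s ∈ ℝ: (i) P_o A_o(s) + A_o(s)ᵀ P_o ⪯ −ν_o I_{n−1} − ν̃_o φ_{(2,3)}(s) CᵀC (in the Loewner order); (ii) ν̲_o I_{n−1} ⪯ P_o D̃_o + D̃_o P_o ⪯ ν̄_o I_{n−1}; and (iii) √(Σ_{i=2}^n g_i²(s)) ≤ ḡ φ_{(2,3)}(s). -/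
/-!
Dividing by `φ_{(2,3)}` reduces the claim to a robust one: all weights `φ_{(i,i+1)} / φ_{(2,3)}` lie
in a fixed interval `[lo, hi]` with `lo > 0` (`exists_ratio_bounds`), and for shift weights in such
an interval a *constant* gain vector `k` and a *constant* form `B` work (`exists_robust_form`). The
gains are then `g_{i+2} = φ_{(2,3)} k_i`, and `φ_{(2,3)} ≥ σ` yields inequality (i).

The robust statement is proved by induction on the dimension. Given `(B, h)` for the coordinates
after `x₀`, let `ξ = x_tail - x₀ h` and take the form `c x₀² + B(ξ, ξ)` and the gain `g (1, h)`.
The injection cancels in the equation for `ξ`, which is the lower-dimensional system with gain `h`,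
where the weight of the link from `x₁` to `x₀` plays the role of the injection weight, plus a
bounded multiple of `x₀` (`deviation_obsField`). Hence all cross terms are at most a constant times
`|x₀| ‖ξ‖`: a large `c` makes the form coercive against `D̃`, and then a large `g` gives decay.
The estimates use the sup norm on `Fin m → ℝ`, compared with the Euclidean one only at the end.
-/

open Matrix

/-- The observer-context matrix `A_o(s)` (0-based indexing on `Fin (n−1)`): superdiagonal entries
`A_o[i][i+1] = φ_{(i+2,i+3)}(s) = φd (i+1) s` and first-column entries `A_o[i][0] = −g_{i+2}(s)`,
where `φd i` denotes `φ_{(i+1,i+2)}` and `g` is indexed as in the paper (`g 2, …, g n`). -/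
noncomputable def obsMatrix (n : ℕ) (φd : ℕ → ℝ → ℝ) (g : ℕ → ℝ → ℝ) (s : ℝ) :
    Matrix (Fin (n - 1)) (Fin (n - 1)) ℝ :=
  Matrix.of fun i j =>
    if (j : ℕ) = (i : ℕ) + 1 then φd ((i : ℕ) + 1) s
    else if (j : ℕ) = 0 then -(g ((i : ℕ) + 2) s) else 0

/-- The matrix `CᵀC` where `C = [1,0,…,0]`. -/
noncomputable def CtC (n : ℕ) : Matrix (Fin (n - 1)) (Fin (n - 1)) ℝ :=
  Matrix.of fun i j => if (i : ℕ) = 0 ∧ (j : ℕ) = 0 then (1 : ℝ) else 0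

/-- `D̃ = diag(1,2,…,n−1) − (1/2)I`. -/
noncomputable def Dtilde (n : ℕ) : Matrix (Fin (n - 1)) (Fin (n - 1)) ℝ :=
  Matrix.diagonal (fun i : Fin (n - 1) => ((i : ℕ) : ℝ) + 1) - (2⁻¹ : ℝ) • (1 : Matrix (Fin (n - 1)) (Fin (n - 1)) ℝ)

/-! ### Robust output injection for normalized weights -/

/-- The vector `A(ψ) x - ψ₀ k x₀`: an upper shift with weights `ψ₁, ψ₂, …` followed by an output
injection with gain vector `k` and weight `ψ₀`. -/
def obsField {m : ℕ} (ψ : ℕ → ℝ) (k x : Fin (m + 1) → ℝ) : Fin (m + 1) → ℝ := fun i =>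
  (if h : (i : ℕ) + 1 < m + 1 then ψ ((i : ℕ) + 1) * x ⟨(i : ℕ) + 1, h⟩ else 0) - ψ 0 * k i * x 0

/-- The action of `diag(1/2, 3/2, …)`, that is of `D̃`, on vectors. -/
noncomputable def scaleVec {m : ℕ} (x : Fin m → ℝ) : Fin m → ℝ := fun i =>
  ((i : ℕ) + 1 / 2 : ℝ) * x i

/-- The deviation `x_tail - x₀ h` of the remaining coordinates from the multiple `x₀ h`. -/
def deviation {m : ℕ} (h : Fin m → ℝ) : (Fin (m + 1) → ℝ) →ₗ[ℝ] (Fin m → ℝ) where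
  toFun x := fun i => x i.succ - x 0 * h i
  map_add' x y := by ext i; simp; ring
  map_smul' c x := by ext i; simp; ring

/-- The form `c x₀ y₀ + B(ξ, η)`, where `ξ, η` are the deviations of `x, y` with respect to `h`. -/
noncomputable def extendForm {m : ℕ} (B : LinearMap.BilinForm ℝ (Fin m → ℝ)) (h : Fin m → ℝ)
    (c : ℝ) :
    LinearMap.BilinForm ℝ (Fin (m + 1) → ℝ) :=
  B.compl₁₂ (deviation h) (deviation h) +
    c • (LinearMap.mul ℝ ℝ).compl₁₂ (LinearMap.proj 0) (LinearMap.proj 0)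

lemma extendForm_apply {m : ℕ} (B : LinearMap.BilinForm ℝ (Fin m → ℝ)) (h : Fin m → ℝ) (c : ℝ)
    (x y : Fin (m + 1) → ℝ) :
    extendForm B h c x y = B (deviation h x) (deviation h y) + c * (x 0 * y 0) := by
  simp [extendForm]

lemma exists_bilin_bound {m : ℕ} (B : LinearMap.BilinForm ℝ (Fin m → ℝ)) :
    ∃ K : ℝ, 0 ≤ K ∧ ∀ x y, |B x y| ≤ K * ‖x‖ * ‖y‖ :=
  ⟨‖B.toContinuousBilinearMap‖, ContinuousLinearMap.opNorm_nonneg _,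
    fun x y => B.toContinuousBilinearMap.le_opNorm₂ x y⟩

lemma obsField_add_smul {m : ℕ} (ψ : ℕ → ℝ) (k x y : Fin (m + 1) → ℝ) (a : ℝ) :
    obsField ψ k (x + a • y) = obsField ψ k x + a • obsField ψ k y := by
  ext i
  simp only [obsField, Pi.add_apply, Pi.smul_apply, smul_eq_mul]
  split_ifs <;> ring

lemma obsField_zero {m : ℕ} (ψ : ℕ → ℝ) (k x : Fin (m + 2) → ℝ) :
    obsField ψ k x 0 = ψ 1 * x (Fin.succ 0) - ψ 0 * k 0 * x 0 := by
  simp [obsField]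

lemma norm_obsField_le {m : ℕ} {ψ : ℕ → ℝ} {hi : ℝ} (hψ : ∀ i, |ψ i| ≤ hi)
    (k x : Fin (m + 1) → ℝ) : ‖obsField ψ k x‖ ≤ hi * ‖x‖ + hi * ‖k‖ * ‖x‖ := by
  have hhi : 0 ≤ hi := (abs_nonneg _).trans (hψ 0)
  refine (pi_norm_le_iff_of_nonneg (by positivity)).2 fun i => ?_
  refine (norm_sub_le _ _).trans (add_le_add ?_ ?_)
  · split_ifs with h
    · rw [norm_mul]
      exact mul_le_mul (hψ _) (norm_le_pi_norm x _) (norm_nonneg _) hhi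
    · simp only [norm_zero]; positivity
  · rw [norm_mul, norm_mul]
    have h1 := hψ 0
    have h2 := norm_le_pi_norm k i
    have h3 := norm_le_pi_norm x 0
    rw [← Real.norm_eq_abs] at h1
    gcongr

lemma norm_sq_le_dev {m : ℕ} (h : Fin m → ℝ) (x : Fin (m + 1) → ℝ) :
    ‖x‖ ^ 2 ≤ (2 + 2 * ‖h‖ ^ 2) * (x 0 ^ 2 + ‖deviation h x‖ ^ 2) := by
  have h0 : ‖x‖ ≤ max |x 0| (‖deviation h x‖ + |x 0| * ‖h‖) := by
    refine (pi_norm_le_iff_of_nonneg (le_max_of_le_left (abs_nonneg _))).2 fun i => ?_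
    refine Fin.cases (le_max_left _ _) (fun j => le_max_of_le_right ?_) i
    have h1 : x j.succ = deviation h x j + x 0 * h j := by simp [deviation]
    have h2 := norm_le_pi_norm (deviation h x) j
    have h3 := norm_le_pi_norm h j
    rw [h1]
    refine (norm_add_le _ _).trans (add_le_add h2 ?_)
    rw [norm_mul, Real.norm_eq_abs (x 0)]
    gcongr
  set z := ‖deviation h x‖
  set q := ‖h‖
  have hz : 0 ≤ z := norm_nonneg _
  have hq : 0 ≤ q := norm_nonneg _
  have hx : 0 ≤ ‖x‖ := norm_nonneg _
  rw [← sq_abs (x 0)]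
  have ha := abs_nonneg (x 0)
  generalize |x 0| = a at *
  have hnn : 0 ≤ q ^ 2 * a ^ 2 := by positivity
  have hnn' : 0 ≤ q ^ 2 * z ^ 2 := by positivity
  rcases le_max_iff.1 h0 with h1 | h1
  · have := pow_le_pow_left₀ hx h1 2
    nlinarith [sq_nonneg a, sq_nonneg z]
  · have := pow_le_pow_left₀ hx h1 2
    nlinarith [sq_nonneg a, sq_nonneg z, sq_nonneg (z - a * q)]

/-- The key cancellation: with the gain `g • (1, h)` the injection term drops out of the dynamics of
the deviation, which then obeys the lower-dimensional equation with gain `h`, up to a term driven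
by `x₀`. -/
lemma deviation_obsField {m : ℕ} (ψ : ℕ → ℝ) (h : Fin (m + 1) → ℝ) (g : ℝ)
    (x : Fin (m + 2) → ℝ) :
    deviation h (obsField ψ (g • (Fin.cons 1 h : Fin (m + 2) → ℝ)) x) =
      obsField (fun i => ψ (i + 1)) h (deviation h x) +
        x 0 • obsField (fun i => ψ (i + 1)) h h := by
  rw [← obsField_add_smul]
  have hx : deviation h x + x 0 • h = fun i => x i.succ := by ext i; simp [deviation]
  rw [hx]
  ext i
  change obsField ψ _ x i.succ - obsField ψ _ x 0 * h i = _
  rw [obsField_zero]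
  simp only [obsField, Pi.smul_apply, smul_eq_mul, Fin.cons_succ, Fin.cons_zero, Fin.val_succ,
    zero_add]
  by_cases hi : (i : ℕ) + 1 < m + 1
  · rw [dif_pos hi, dif_pos (by omega)]
    simp only [Fin.succ_mk]
    ring
  · rw [dif_neg hi, dif_neg (by omega)]
    ring

lemma deviation_scaleVec {m : ℕ} (h : Fin m → ℝ) (x : Fin (m + 1) → ℝ) :
    deviation h (scaleVec x) =
      scaleVec (deviation h x) + deviation h x + x 0 • (scaleVec h + (1 / 2 : ℝ) • h) := by
  ext i
  simp [deviation, scaleVec]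
  ring

/-- Robust output injection: for shift weights confined to `[lo, hi]` there are a constant gain
vector and a constant quadratic Lyapunov form, the latter also coercive against `D̃`.
By induction on the dimension, choosing first the weight of `x₀²` in the form and then the gain. -/
theorem exists_robust_form (lo hi : ℝ) (hlo : 0 < lo) (m : ℕ) :
    ∃ (B : LinearMap.BilinForm ℝ (Fin (m + 1) → ℝ)) (k : Fin (m + 1) → ℝ) (ν : ℝ),
      0 < ν ∧ (∀ x y, B x y = B y x) ∧ (∀ x, ν * ‖x‖ ^ 2 ≤ B x x) ∧
      (∀ x, ν * ‖x‖ ^ 2 ≤ B x (scaleVec x)) ∧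
      ∀ ψ : ℕ → ℝ, (∀ i, lo ≤ ψ i ∧ ψ i ≤ hi) → ∀ x, B x (obsField ψ k x) ≤ -(ν * ‖x‖ ^ 2) := by
  induction m with
  | zero =>
    have hn : ∀ x : Fin (0 + 1) → ℝ, ‖x‖ ^ 2 = x 0 ^ 2 := by
      intro x
      have : ‖x‖ = |x 0| := le_antisymm
        ((pi_norm_le_iff_of_nonneg (abs_nonneg _)).2 fun i => by
          rw [Fin.fin_one_eq_zero i, Real.norm_eq_abs]) (norm_le_pi_norm x 0)
      rw [this, sq_abs]
    refine ⟨(LinearMap.mul ℝ ℝ).compl₁₂ (LinearMap.proj 0) (LinearMap.proj 0), 1, min (1 / 2) lo,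
      by positivity, fun x y => by simp [mul_comm], fun x => ?_, fun x => ?_, fun ψ hψ x => ?_⟩
    · have := min_le_left (1 / 2) lo
      rw [hn]
      simp
      nlinarith [sq_nonneg (x 0)]
    · have := min_le_left (1 / 2) lo
      rw [hn]
      simp [scaleVec]
      nlinarith [sq_nonneg (x 0)]
    · have := min_le_right (1 / 2) lo
      rw [hn]
      simp [obsField]
      nlinarith [sq_nonneg (x 0), (hψ 0).1, mul_nonneg (sub_nonneg.2 (hψ 0).1) (sq_nonneg (x 0))]
  | succ m ih =>
    obtain ⟨B, h, ν, hν, hsymm, hpos, hD, hF⟩ := ih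
    obtain ⟨K, hK, hB⟩ := exists_bilin_bound B
    set q := ‖h‖ with hq
    have hq0 : 0 ≤ q := norm_nonneg _
    set K₂ := K * ‖scaleVec h + (1 / 2 : ℝ) • h‖ with hK₂
    set c := ν + K₂ ^ 2 / ν with hc
    have hc0 : 0 < c := by positivity
    set M := c * hi + K * (hi * q + hi * q * q) with hM
    set g := (c * hi * q + M ^ 2 / (2 * ν) + ν / 2) / (c * lo) with hg
    have hgc : c * lo * g = c * hi * q + M ^ 2 / (2 * ν) + ν / 2 := by
      rw [hg]; field_simp
    have hR : 0 < 2 + 2 * q ^ 2 := by positivity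
    -- It suffices to bound the forms by `x₀² + ‖ξ‖²`, which dominates `‖x‖²`.
    have key : ∀ x : Fin (m + 1 + 1) → ℝ, ν / 2 / (2 + 2 * q ^ 2) * ‖x‖ ^ 2 ≤
        ν / 2 * (x 0 ^ 2 + ‖deviation h x‖ ^ 2) := by
      intro x
      rw [div_mul_eq_mul_div, div_le_iff₀ hR]
      nlinarith [norm_sq_le_dev h x]
    refine ⟨extendForm B h c, g • (Fin.cons 1 h : Fin (m + 2) → ℝ), ν / 2 / (2 + 2 * q ^ 2),
      by positivity, fun x y => ?_, fun x => (key x).trans ?_, fun x => (key x).trans ?_,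
      fun ψ hψ x => le_trans ?_ (neg_le_neg (key x))⟩
    · rw [extendForm_apply, extendForm_apply, hsymm, mul_comm (x 0)]
    · rw [extendForm_apply]
      have h1 := hpos (deviation h x)
      have h2 : 0 ≤ K₂ ^ 2 / ν * x 0 ^ 2 := by positivity
      nlinarith [sq_nonneg (x 0), sq_nonneg ‖deviation h x‖]
    · rw [extendForm_apply, deviation_scaleVec, map_add, map_add, map_smul, smul_eq_mul]
      set ξ := deviation h x
      have h1 := hD ξ
      have h2 : 0 ≤ B ξ ξ := le_trans (by positivity) (hpos ξ)
      have h3 := hB ξ (scaleVec h + (1 / 2 : ℝ) • h)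
      have h4 : scaleVec x 0 = 1 / 2 * x 0 := by simp [scaleVec]
      rw [h4]
      have h5 : |x 0 * B ξ (scaleVec h + (1 / 2 : ℝ) • h)| ≤ |x 0| * (K₂ * ‖ξ‖) := by
        rw [abs_mul]
        refine mul_le_mul_of_nonneg_left (h3.trans_eq ?_) (abs_nonneg _)
        rw [hK₂]; ring
      have h6 := (abs_le.1 h5).1
      have h7 : |x 0| * (K₂ * ‖ξ‖) ≤ ν / 2 * ‖ξ‖ ^ 2 + K₂ ^ 2 / ν / 2 * x 0 ^ 2 := by
        rw [← sq_abs (x 0)]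
        have : ν / 2 * ‖ξ‖ ^ 2 + K₂ ^ 2 / ν / 2 * |x 0| ^ 2 - |x 0| * (K₂ * ‖ξ‖)
            = (ν * ‖ξ‖ - K₂ * |x 0|) ^ 2 / (2 * ν) := by
          field_simp; ring
        have h8 : 0 ≤ (ν * ‖ξ‖ - K₂ * |x 0|) ^ 2 / (2 * ν) := by positivity
        linarith
      have h9 : c * (x 0 * (1 / 2 * x 0)) = ν / 2 * x 0 ^ 2 + K₂ ^ 2 / ν / 2 * x 0 ^ 2 := by
        rw [hc]; ring
      linarith
    · rw [extendForm_apply, deviation_obsField, map_add, map_smul, smul_eq_mul]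
      have hψa : ∀ i, |ψ i| ≤ hi := fun i => by
        rw [abs_of_pos (hlo.trans_le (hψ i).1)]; exact (hψ i).2
      have hhi : 0 ≤ hi := (abs_nonneg _).trans (hψa 0)
      have hx1 : x (Fin.succ 0) = deviation h x 0 + x 0 * h 0 := by simp [deviation]
      have h0 : obsField ψ (g • (Fin.cons 1 h : Fin (m + 2) → ℝ)) x 0 =
          ψ 1 * (deviation h x 0 + x 0 * h 0) - ψ 0 * g * x 0 := by
        rw [← hx1]
        simp [obsField]
      rw [h0]
      set ξ := deviation h x
      have h1 := hF (fun i => ψ (i + 1)) (fun i => hψ (i + 1)) ξ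
      set w := obsField (fun i => ψ (i + 1)) h h with hw
      have h2 : ‖w‖ ≤ hi * q + hi * q * q := norm_obsField_le (fun i => hψa (i + 1)) h h
      have h3 : x 0 * B ξ w ≤ |x 0| * (K * (hi * q + hi * q * q) * ‖ξ‖) := by
        refine (le_abs_self _).trans ?_
        rw [abs_mul]
        refine mul_le_mul_of_nonneg_left ((hB ξ w).trans ?_) (abs_nonneg _)
        calc K * ‖ξ‖ * ‖w‖ ≤ K * ‖ξ‖ * (hi * q + hi * q * q) := by gcongr
          _ = _ := by ring
      have h4 : x 0 * (ψ 1 * ξ 0) ≤ |x 0| * (hi * ‖ξ‖) := by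
        refine (le_abs_self _).trans ?_
        rw [abs_mul, abs_mul]
        have := norm_le_pi_norm ξ 0
        rw [Real.norm_eq_abs] at this
        have := hψa 1
        gcongr
      have h5 : ψ 1 * h 0 ≤ hi * q := by
        refine (le_abs_self _).trans ?_
        rw [abs_mul]
        exact mul_le_mul (hψa 1) (norm_le_pi_norm h 0) (abs_nonneg _) hhi
      have hg0 : 0 ≤ g := by positivity
      have h6 : lo * g ≤ ψ 0 * g := mul_le_mul_of_nonneg_right (hψ 0).1 hg0
      have h7 : |x 0| * (M * ‖ξ‖) ≤ ν / 2 * ‖ξ‖ ^ 2 + M ^ 2 / (2 * ν) * x 0 ^ 2 := by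
        rw [← sq_abs (x 0)]
        have : ν / 2 * ‖ξ‖ ^ 2 + M ^ 2 / (2 * ν) * |x 0| ^ 2 - |x 0| * (M * ‖ξ‖)
            = (ν * ‖ξ‖ - M * |x 0|) ^ 2 / (2 * ν) := by
          field_simp; ring
        have h8 : 0 ≤ (ν * ‖ξ‖ - M * |x 0|) ^ 2 / (2 * ν) := by positivity
        linarith
      have h8 : c * (x 0 * (ψ 1 * (ξ 0 + x 0 * h 0) - ψ 0 * g * x 0)) =
          c * (x 0 * (ψ 1 * ξ 0)) + c * (ψ 1 * h 0 - ψ 0 * g) * x 0 ^ 2 := by ring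
      have h9 : c * (ψ 1 * h 0 - ψ 0 * g) * x 0 ^ 2 ≤ (c * hi * q - c * lo * g) * x 0 ^ 2 := by
        refine mul_le_mul_of_nonneg_right ?_ (sq_nonneg _)
        have := mul_le_mul_of_nonneg_left (sub_le_sub h5 h6) hc0.le
        linarith
      have h10 := mul_le_mul_of_nonneg_left h4 hc0.le
      have h11 : |x 0| * (M * ‖ξ‖) = |x 0| * (K * (hi * q + hi * q * q) * ‖ξ‖) +
          c * (|x 0| * (hi * ‖ξ‖)) := by rw [hM]; ring
      rw [hgc] at h9
      rw [h8]
      linarith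

/-! ### Matrix form of the estimates -/

/-- The weights `φ_j` are all comparable to `φ_1`, by chaining the ratio bounds. -/
lemma exists_ratio_bounds (n : ℕ) (φd : ℕ → ℝ → ℝ) (hpos : ∀ i, i < n - 1 → ∀ s, 0 < φd i s)
    (ρub ρlb : ℕ → ℝ)
    (hρ : ∀ i, 2 ≤ i → i < n - 1 → 0 < ρub i ∧ 0 < ρlb i ∧
      ∀ s, ρub i * φd (i - 1) s ≤ φd i s ∧ φd i s ≤ ρlb i * φd (i - 1) s) (N : ℕ) :
    ∃ lo hi : ℝ, 0 < lo ∧ lo ≤ 1 ∧ 1 ≤ hi ∧ ∀ j, 1 ≤ j → j < n - 1 → j ≤ N + 1 → ∀ s,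
      lo * φd 1 s ≤ φd j s ∧ φd j s ≤ hi * φd 1 s := by
  induction N with
  | zero =>
    refine ⟨1, 1, one_pos, le_rfl, le_rfl, fun j h1 _ h2 s => ?_⟩
    obtain rfl : j = 1 := by omega
    simp
  | succ N ih =>
    obtain ⟨lo, hi, hlo, hlo1, hhi1, hb⟩ := ih
    by_cases hN : N + 2 < n - 1
    · obtain ⟨hr1, hr2, hr⟩ := hρ (N + 2) (by omega) hN
      refine ⟨min lo (ρub (N + 2) * lo), max hi (ρlb (N + 2) * hi), by positivity,
        (min_le_left _ _).trans hlo1, hhi1.trans (le_max_left _ _), fun j h1 h2 h3 s => ?_⟩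
      have hp := hpos 1 (by omega) s
      rcases Nat.lt_or_ge j (N + 2) with hj | hj
      · obtain ⟨ha, hb'⟩ := hb j h1 h2 (by omega) s
        exact ⟨(mul_le_mul_of_nonneg_right (min_le_left _ _) hp.le).trans ha,
          hb'.trans (mul_le_mul_of_nonneg_right (le_max_left _ _) hp.le)⟩
      · obtain rfl : j = N + 2 := by omega
        obtain ⟨ha, hb'⟩ := hb (N + 1) (by omega) (by omega) le_rfl s
        obtain ⟨hc, hd⟩ := hr s
        rw [show N + 2 - 1 = N + 1 from rfl] at hc hd
        constructor
        · refine (mul_le_mul_of_nonneg_right (min_le_right _ _) hp.le).trans (le_trans ?_ hc)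
          rw [mul_assoc]
          exact mul_le_mul_of_nonneg_left ha hr1.le
        · refine hd.trans (le_trans ?_
            (mul_le_mul_of_nonneg_right (le_max_right _ _) hp.le))
          rw [mul_assoc]
          exact mul_le_mul_of_nonneg_left hb' hr2.le
    · exact ⟨lo, hi, hlo, hlo1, hhi1, fun j h1 h2 h3 s => hb j h1 h2 (by omega) s⟩

lemma dotProduct_sym_mulVec {N : ℕ} {P : Matrix (Fin N) (Fin N) ℝ} (hP : P.IsSymm)
    (A : Matrix (Fin N) (Fin N) ℝ) (x : Fin N → ℝ) :
    x ⬝ᵥ ((P * A + Aᵀ * P) *ᵥ x) = 2 * (x ⬝ᵥ (P *ᵥ (A *ᵥ x))) := by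
  have h : x ⬝ᵥ ((Aᵀ * P) *ᵥ x) = x ⬝ᵥ ((P * A) *ᵥ x) := by
    rw [dotProduct_mulVec, ← mulVec_transpose, dotProduct_comm, transpose_mul, transpose_transpose,
      hP.eq]
  rw [add_mulVec, dotProduct_add, h, ← mulVec_mulVec]
  ring

lemma lyapunov_posSemidef {N : ℕ} {P A C : Matrix (Fin N) (Fin N) ℝ} (hP : P.IsSymm)
    (hC : C.IsSymm) {a b : ℝ}
    (h : ∀ x, 2 * (x ⬝ᵥ (P *ᵥ (A *ᵥ x))) ≤ -(a * (x ⬝ᵥ x)) - b * (x ⬝ᵥ (C *ᵥ x))) :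
    ((-a) • (1 : Matrix (Fin N) (Fin N) ℝ) - b • C - (P * A + Aᵀ * P)).PosSemidef := by
  refine .of_dotProduct_mulVec_nonneg ?_ fun x => ?_
  · rw [IsHermitian, conjTranspose_eq_transpose_of_trivial]
    simp only [transpose_sub, transpose_add, transpose_smul, transpose_one, transpose_mul,
      transpose_transpose, hP.eq, hC.eq]
    rw [add_comm (P * _)]
  · rw [star_trivial, sub_mulVec, sub_mulVec, smul_mulVec, smul_mulVec, one_mulVec,
      dotProduct_sub, dotProduct_sub, dotProduct_smul, dotProduct_smul, smul_eq_mul, smul_eq_mul,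
      dotProduct_sym_mulVec hP]
    linarith [h x]

lemma isHermitian_mul_add_mul {N : ℕ} {P D : Matrix (Fin N) (Fin N) ℝ} (hP : P.IsSymm)
    (hD : D.IsSymm) : (P * D + D * P).IsHermitian := by
  rw [IsHermitian, conjTranspose_eq_transpose_of_trivial, transpose_add, transpose_mul,
    transpose_mul, hD.eq, hP.eq, add_comm]

lemma dotProduct_mul_add_mul {N : ℕ} {P D : Matrix (Fin N) (Fin N) ℝ} (hP : P.IsSymm)
    (hD : D.IsSymm) (x : Fin N → ℝ) :
    x ⬝ᵥ ((P * D + D * P) *ᵥ x) = 2 * (x ⬝ᵥ (P *ᵥ (D *ᵥ x))) := by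
  have h := dotProduct_sym_mulVec hP D x
  rwa [hD.eq] at h

lemma posSemidef_sub_smul_one {N : ℕ} {P D : Matrix (Fin N) (Fin N) ℝ} (hP : P.IsSymm)
    (hD : D.IsSymm) {a : ℝ} (h : ∀ x, a * (x ⬝ᵥ x) ≤ 2 * (x ⬝ᵥ (P *ᵥ (D *ᵥ x)))) :
    (P * D + D * P - a • (1 : Matrix (Fin N) (Fin N) ℝ)).PosSemidef := by
  refine .of_dotProduct_mulVec_nonneg ((isHermitian_mul_add_mul hP hD).sub ?_) fun x => ?_
  · rw [IsHermitian, conjTranspose_eq_transpose_of_trivial, transpose_smul, transpose_one]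
  · rw [star_trivial, sub_mulVec, smul_mulVec, one_mulVec, dotProduct_sub, dotProduct_smul,
      smul_eq_mul, dotProduct_mul_add_mul hP hD]
    linarith [h x]

lemma posSemidef_smul_one_sub {N : ℕ} {P D : Matrix (Fin N) (Fin N) ℝ} (hP : P.IsSymm)
    (hD : D.IsSymm) {a : ℝ} (h : ∀ x, 2 * (x ⬝ᵥ (P *ᵥ (D *ᵥ x))) ≤ a * (x ⬝ᵥ x)) :
    (a • (1 : Matrix (Fin N) (Fin N) ℝ) - (P * D + D * P)).PosSemidef := by
  refine .of_dotProduct_mulVec_nonneg (IsHermitian.sub ?_ (isHermitian_mul_add_mul hP hD))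
    fun x => ?_
  · rw [IsHermitian, conjTranspose_eq_transpose_of_trivial, transpose_smul, transpose_one]
  · rw [star_trivial, sub_mulVec, smul_mulVec, one_mulVec, dotProduct_sub, dotProduct_smul,
      smul_eq_mul, dotProduct_mul_add_mul hP hD]
    linarith [h x]

lemma norm_sq_le_dotProduct {N : ℕ} (x : Fin N → ℝ) : ‖x‖ ^ 2 ≤ x ⬝ᵥ x := by
  have h0 : 0 ≤ x ⬝ᵥ x := Finset.sum_nonneg fun i _ => mul_self_nonneg (x i)
  have h : ‖x‖ ≤ √(x ⬝ᵥ x) := by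
    refine (pi_norm_le_iff_of_nonneg (Real.sqrt_nonneg _)).2 fun i => Real.abs_le_sqrt ?_
    rw [sq]
    exact Finset.single_le_sum (f := fun i => x i * x i) (fun i _ => mul_self_nonneg (x i))
      (Finset.mem_univ i)
  calc ‖x‖ ^ 2 ≤ √(x ⬝ᵥ x) ^ 2 := by gcongr
    _ = x ⬝ᵥ x := Real.sq_sqrt h0

lemma dotProduct_le_norm_sq {N : ℕ} (x : Fin N → ℝ) : x ⬝ᵥ x ≤ N * ‖x‖ ^ 2 := by
  have h : ∀ i ∈ Finset.univ, x i * x i ≤ ‖x‖ ^ 2 := fun i _ => by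
    have := norm_le_pi_norm x i
    rw [Real.norm_eq_abs] at this
    rw [← sq, ← sq_abs]
    gcongr
  simpa [dotProduct] using Finset.sum_le_sum h

lemma norm_scaleVec_le {N : ℕ} (x : Fin N → ℝ) : ‖scaleVec x‖ ≤ (N + 1) * ‖x‖ := by
  refine (pi_norm_le_iff_of_nonneg (by positivity)).2 fun i => ?_
  have h := norm_le_pi_norm x i
  have hi : ((i : ℕ) : ℝ) + 1 / 2 ≤ N + 1 := by
    have : ((i : ℕ) : ℝ) ≤ N := by exact_mod_cast i.2.le
    linarith
  rw [scaleVec, norm_mul, Real.norm_of_nonneg (by positivity)]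
  gcongr

lemma Dtilde_mulVec (m : ℕ) (x : Fin (m + 1) → ℝ) : Dtilde (m + 2) *ᵥ x = scaleVec x := by
  ext i
  change ((Matrix.diagonal (fun i : Fin (m + 1) => ((i : ℕ) : ℝ) + 1) -
    (2⁻¹ : ℝ) • (1 : Matrix (Fin (m + 1)) (Fin (m + 1)) ℝ)) *ᵥ x) i = _
  rw [sub_mulVec, smul_mulVec, one_mulVec, Pi.sub_apply, mulVec_diagonal]
  simp only [scaleVec, Pi.smul_apply, smul_eq_mul]
  ring

lemma CtC_dotProduct (m : ℕ) (x : Fin (m + 1) → ℝ) : x ⬝ᵥ (CtC (m + 2) *ᵥ x) = x 0 ^ 2 := by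
  have h : ∀ i j : Fin (m + 1), CtC (m + 2) i j = if i = 0 ∧ j = 0 then (1 : ℝ) else 0 := by
    intro i j
    simp only [CtC, Matrix.of_apply, Fin.ext_iff]
    rfl
  change ∑ i : Fin (m + 1), x i * ∑ j : Fin (m + 1), CtC (m + 2) i j * x j = _
  simp only [h, ite_and, ite_mul, one_mul, zero_mul]
  rw [Finset.sum_eq_single 0]
  · simp [sq]
  · intro i _ hi
    simp [hi]
  · simp

/-- With gains `g_{i+2} = φ_1 k_i`, the matrix `A_o` is `φ_1` times the normalized field. -/
lemma obsMatrix_mulVec (m : ℕ) (φd g : ℕ → ℝ → ℝ) (s : ℝ) (ψ : ℕ → ℝ) (k x : Fin (m + 1) → ℝ)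
    (hψ0 : ψ 0 = 1) (hψ : ∀ j, 1 ≤ j → j < m + 1 → φd 1 s * ψ j = φd j s)
    (hg : ∀ i : Fin (m + 1), g ((i : ℕ) + 2) s = φd 1 s * k i) :
    obsMatrix (m + 2) φd g s *ᵥ x = φd 1 s • obsField ψ k x := by
  ext i
  have h : ∀ j : Fin (m + 1), obsMatrix (m + 2) φd g s i j * x j =
      (if (j : ℕ) = (i : ℕ) + 1 then φd ((i : ℕ) + 1) s * x j else 0) -
        (if j = 0 then φd 1 s * k i * x j else 0) := by
    intro j
    simp only [obsMatrix, Matrix.of_apply, hg]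
    by_cases h0 : j = 0
    · subst h0
      simp
    · have : (j : ℕ) ≠ 0 := fun h => h0 (Fin.ext h)
      simp [h0, this]
  change ∑ j : Fin (m + 1), obsMatrix (m + 2) φd g s i j * x j = _
  rw [Finset.sum_congr rfl fun j _ => h j, Finset.sum_sub_distrib]
  simp only [Finset.sum_ite_eq', Finset.mem_univ, if_true, Pi.smul_apply, smul_eq_mul, obsField,
    hψ0]
  by_cases hi : (i : ℕ) + 1 < m + 1
  · rw [dif_pos hi, Finset.sum_eq_single ⟨(i : ℕ) + 1, hi⟩]
    · simp only [if_true, ← hψ _ (Nat.le_add_left 1 _) hi]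
      ring
    · intro j _ hj
      exact if_neg fun h => hj (Fin.ext h)
    · simp
  · rw [dif_neg hi, Finset.sum_eq_zero]
    · ring
    · intro j _
      exact if_neg (by omega)

/-- existence of solutions to the observer-context coupled Lyapunov inequalities
(in the Loewner order, `X ⪯ Y` iff `Y − X` is positive semidefinite) together with observer gain
functions `g₂,…,g_n` satisfying `√(Σ_{i=2}^n g_i²(s)) ≤ ḡ φ_{(2,3)}(s)`. -/
theorem observer_coupled_lyapunov_inequalities (n : ℕ) (hn : 3 ≤ n) (σ : ℝ) (hσ : 0 < σ)
    (φd : ℕ → ℝ → ℝ)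
    (hφcont : ∀ i, i < n - 1 → Continuous (φd i))
    (hA1 : ∀ i, i < n - 1 → ∀ s, σ ≤ φd i s)
    (ρub ρlb : ℕ → ℝ)
    (hρ : ∀ i, 2 ≤ i → i < n - 1 → 0 < ρub i ∧ 0 < ρlb i ∧
      ∀ s, ρub i * φd (i - 1) s ≤ φd i s ∧ φd i s ≤ ρlb i * φd (i - 1) s) :
    ∃ (P : Matrix (Fin (n - 1)) (Fin (n - 1)) ℝ) (νo νot νol νoh gbar : ℝ)
      (g : ℕ → ℝ → ℝ),
      P.PosDef ∧ P.IsSymm ∧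
      0 < νo ∧ 0 < νot ∧ 0 < νol ∧ 0 < νoh ∧ 0 < gbar ∧
      (∀ i, 2 ≤ i → i ≤ n → Continuous (g i)) ∧
      ∀ s : ℝ,
        ((-νo) • (1 : Matrix (Fin (n - 1)) (Fin (n - 1)) ℝ) - (νot * φd 1 s) • CtC n -
            (P * obsMatrix n φd g s + (obsMatrix n φd g s)ᵀ * P)).PosSemidef ∧
        (P * Dtilde n + Dtilde n * P - νol • (1 : Matrix (Fin (n - 1)) (Fin (n - 1)) ℝ)).PosSemidef ∧
        (νoh • (1 : Matrix (Fin (n - 1)) (Fin (n - 1)) ℝ) -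
            (P * Dtilde n + Dtilde n * P)).PosSemidef ∧
        Real.sqrt (∑ i ∈ Finset.Icc 2 n, g i s ^ 2) ≤ gbar * φd 1 s := by
  obtain ⟨m, rfl⟩ : ∃ m, n = m + 2 := ⟨n - 2, by omega⟩
  rw [show m + 2 - 1 = m + 1 from rfl] at *
  have hφpos : ∀ i, i < m + 1 → ∀ s, 0 < φd i s := fun i hi s => hσ.trans_le (hA1 i hi s)
  obtain ⟨lo, hi, hlo, hlo1, hhi1, hratio⟩ :=
    exists_ratio_bounds (m + 2) φd hφpos ρub ρlb hρ (m + 2)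
  obtain ⟨B, k, ν, hν, hsymm, hpos, hD, hF⟩ := exists_robust_form lo hi hlo m
  obtain ⟨K, hK, hB⟩ := exists_bilin_bound B
  set P : Matrix (Fin (m + 1)) (Fin (m + 1)) ℝ := LinearMap.BilinForm.toMatrix' B with hPdef
  have hPB : ∀ x y, x ⬝ᵥ (P *ᵥ y) = B x y := fun x y => by
    rw [← Matrix.toBilin'_apply', hPdef, Matrix.toBilin'_toMatrix']
  have hPs : P.IsSymm := by
    ext i j
    simp only [Matrix.transpose_apply, hPdef, LinearMap.BilinForm.toMatrix'_apply]
    exact hsymm _ _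
  have hm : (0 : ℝ) < m + 1 := by positivity
  set ε : ℝ := ν / (m + 1) with hε
  have hε0 : 0 < ε := by positivity
  have hεν : ∀ x : Fin (m + 1) → ℝ, ε * (x ⬝ᵥ x) ≤ ν * ‖x‖ ^ 2 := fun x => by
    have h := mul_le_mul_of_nonneg_left (dotProduct_le_norm_sq x) hε0.le
    refine h.trans_eq ?_
    push_cast
    rw [hε]
    field_simp
  have hx0 : ∀ x : Fin (m + 1) → ℝ, x 0 ^ 2 ≤ x ⬝ᵥ x := fun x => by
    rw [sq]
    exact Finset.single_le_sum (f := fun i => x i * x i) (fun i _ => mul_self_nonneg (x i))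
      (Finset.mem_univ 0)
  have hDT : (Dtilde (m + 2)).IsSymm := by
    simp [IsSymm, Dtilde]
  have hCT : (CtC (m + 2)).IsSymm := by
    ext i j
    simp [CtC, and_comm]
  set κ : ℕ → ℝ := fun i => if h : i - 2 < m + 1 then k ⟨i - 2, h⟩ else 0 with hκ
  refine ⟨P, ε * σ, ε, ε, 2 * (K * (((m + 1 : ℕ) : ℝ) + 1)) + 1,
    √(∑ i ∈ Finset.Icc 2 (m + 2), κ i ^ 2) + 1, fun i s => φd 1 s * κ i,
    ?_, hPs, by positivity, hε0, hε0, by positivity, by positivity, fun i _ _ => ?_,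
    fun s => ⟨?_, ?_, ?_, ?_⟩⟩
  · refine .of_dotProduct_mulVec_pos
      (by rw [IsHermitian, conjTranspose_eq_transpose_of_trivial, hPs.eq]) fun x hx => ?_
    rw [star_trivial, hPB]
    have := norm_pos_iff.2 hx
    exact lt_of_lt_of_le (by positivity) (hpos x)
  · exact (hφcont 1 (by omega)).mul continuous_const
  · have hφ1 := hφpos 1 (by omega) s
    -- The normalized weights; beyond the last index the value is irrelevant.
    set ψ : ℕ → ℝ := fun j => if 1 ≤ j ∧ j < m + 1 then φd j s / φd 1 s else 1 with hψdef
    have hψ : ∀ j, lo ≤ ψ j ∧ ψ j ≤ hi := fun j => by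
      by_cases hj : 1 ≤ j ∧ j < m + 1
      · obtain ⟨h1, h2⟩ := hratio j hj.1 hj.2 (by omega) s
        simp only [hψdef, if_pos hj]
        exact ⟨(le_div_iff₀ hφ1).2 h1, (div_le_iff₀ hφ1).2 h2⟩
      · simp only [hψdef, if_neg hj]
        exact ⟨hlo1, hhi1⟩
    have hA : ∀ x : Fin (m + 1) → ℝ,
        obsMatrix (m + 2) φd (fun i s => φd 1 s * κ i) s *ᵥ x = φd 1 s • obsField ψ k x := fun x =>
      obsMatrix_mulVec m φd _ s ψ k x (by simp [hψdef])
        (fun j h1 h2 => by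
          simp only [hψdef, if_pos (And.intro h1 h2)]
          field_simp)
        (fun i => by
          have h : (i : ℕ) + 2 - 2 < m + 1 := i.2
          simp only [hκ, dif_pos h, Nat.add_sub_cancel])
    refine lyapunov_posSemidef (N := m + 1) hPs hCT fun x => ?_
    rw [hA, hPB, map_smul, smul_eq_mul, CtC_dotProduct]
    have h4 : B x (obsField ψ k x) ≤ -(ε * (x ⬝ᵥ x)) := (hF ψ hψ x).trans (neg_le_neg (hεν x))
    have h5 := mul_le_mul_of_nonneg_left h4 hφ1.le
    have h6 : 0 ≤ x ⬝ᵥ x := (sq_nonneg _).trans (hx0 x)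
    have h7 : ε * σ * (x ⬝ᵥ x) ≤ ε * φd 1 s * (x ⬝ᵥ x) := by
      have := hA1 1 (by omega) s
      gcongr
    have h8 : ε * φd 1 s * x 0 ^ 2 ≤ ε * φd 1 s * (x ⬝ᵥ x) :=
      mul_le_mul_of_nonneg_left (hx0 x) (by positivity)
    linarith
  · refine posSemidef_sub_smul_one (N := m + 1) hPs hDT fun x => ?_
    rw [Dtilde_mulVec, hPB]
    have h1 := hD x
    have h2 := hεν x
    have h3 : 0 ≤ ν * ‖x‖ ^ 2 := by positivity
    linarith
  · refine posSemidef_smul_one_sub (N := m + 1) hPs hDT fun x => ?_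
    rw [Dtilde_mulVec, hPB]
    have h1 := (le_abs_self _).trans (hB x (scaleVec x))
    have h2 : K * ‖x‖ * ‖scaleVec x‖ ≤ K * ‖x‖ * ((((m + 1 : ℕ) : ℝ) + 1) * ‖x‖) :=
      mul_le_mul_of_nonneg_left (norm_scaleVec_le x) (by positivity)
    have h3 : K * (((m + 1 : ℕ) : ℝ) + 1) * ‖x‖ ^ 2 ≤ K * (((m + 1 : ℕ) : ℝ) + 1) * (x ⬝ᵥ x) :=
      mul_le_mul_of_nonneg_left (norm_sq_le_dotProduct x) (by positivity)
    have h4 : 0 ≤ x ⬝ᵥ x := (sq_nonneg _).trans (hx0 x)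
    nlinarith
  · have hφ1 := hφpos 1 (by omega) s
    simp only [mul_pow]
    rw [← Finset.mul_sum, Real.sqrt_mul (sq_nonneg _), Real.sqrt_sq hφ1.le, mul_comm]
    refine mul_le_mul_of_nonneg_right ?_ hφ1.le
    linarith
end

section
/- Let n ≥ 3 and 2 ≤ i ≤ n−1 be integers. Let φ_{(1,2)}, φ_{(i,i+1)}, g_i, g_{i+1}: ℝ → ℝ be continuous with φ_{(1,2)}(s) ≠ 0 for all s, and define f_j(s) = ∫₀^s g_j(π)/φ_{(1,2)}(π) dπ for j ∈ {i, i+1}. Let r, x₁, x₂, x_i, x_{i+1}, x̂₂, x̂_i, x̂_{i+1}, Φ_i: ℝ → ℝ be functions of time such that at a time instant t: r is differentiable with derivative ṙ(t) and r(t) > 0; x₁ is differentiable; x_i is differentiable with dx_i/dt = φ_{(i,i+1)}(x₁(t)) x_{i+1}(t) + Φ_i(t); and x̂_i is differentiable with dx̂_i/dt = φ_{(i,i+1)}(x₁(t))[x̂_{i+1}(t) + r(t)^i f_{i+1}(x₁(t))] − r(t)^{i−1} g_i(x₁(t))[x̂₂(t) + r(t) f₂(x₁(t))] − (i−1) ṙ(t)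 r(t)^{i−2} f_i(x₁(t)), where additionally dx₁/dt = φ_{(1,2)}(x₁(t)) x₂(t) + Φ₁(t) for a function Φ₁. Define e_j = x̂_j + r^{j−1} f_j(x₁) − x_j and ε_j = e_j / r^{j−1} for j ∈ {2, i, i+1}. Then ε_i is differentiable at t with dε_i/dt = r(t) φ_{(i,i+1)}(x₁(t)) ε_{i+1}(t) − r(t) g_i(x₁(t)) ε₂(t) − (i−1)(ṙ(t)/r(t)) ε_i(t) − Φ_i(t)/r(t)^{i−1} + g_i(x₁(t)) Φ₁(t)/φ_{(1,2)}(x₁(t)). -/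
/-!
By the fundamental theorem of calculus and the chain rule,
`d/dt f_i(x₁) = g_i(x₁) (x₂ + Φ₁ / φ_{(1,2)}(x₁))`. The quotient rule then gives the derivative of
`ε_i`; the term `(i-1) ṙ r^{i-2} f_i(x₁)` from differentiating `r^{i-1}` cancels against the last
term of the observer equation, and what remains is an identity of rational functions.
-/

/-- componentwise scaled observer error dynamics (rows `1,…,n−2`): with
`ε_j = (x̂_j + r^{j−1} f_j(x₁) − x_j)/r^{j−1}` and the plant/observer equations as given,
`ε̇_i = r φ_{(i,i+1)}(x₁) ε_{i+1} − r g_i(x₁) ε₂ − (i−1)(ṙ/r) ε_i − Φ_i/r^{i−1}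
  + g_i(x₁) Φ₁/φ_{(1,2)}(x₁)`. -/
theorem scaled_observer_error_dynamics_row (n i : ℕ) (hn : 3 ≤ n) (hi : 2 ≤ i)
    (hin : i ≤ n - 1)
    (φ12 φd : ℝ → ℝ) (g : ℕ → ℝ → ℝ)
    (hφ12 : Continuous φ12) (hφ12ne : ∀ s, φ12 s ≠ 0) (hφd : Continuous φd)
    (hgi : Continuous (g i)) (hgi1 : Continuous (g (i + 1)))
    (f : ℕ → ℝ → ℝ) (hf : ∀ j s, f j s = ∫ p in (0:ℝ)..s, g j p / φ12 p)
    (x xh : ℕ → ℝ → ℝ) (r Φ1 Φi : ℝ → ℝ) (t rdot : ℝ)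
    (hr : HasDerivAt r rdot t) (hrpos : 0 < r t)
    (hx1 : HasDerivAt (x 1) (φ12 (x 1 t) * x 2 t + Φ1 t) t)
    (hxi : HasDerivAt (x i) (φd (x 1 t) * x (i + 1) t + Φi t) t)
    (hxhi : HasDerivAt (xh i)
      (φd (x 1 t) * (xh (i + 1) t + r t ^ i * f (i + 1) (x 1 t)) -
        r t ^ (i - 1) * g i (x 1 t) * (xh 2 t + r t * f 2 (x 1 t)) -
        ((i : ℝ) - 1) * rdot * r t ^ (i - 2) * f i (x 1 t)) t) :
    HasDerivAt (fun s => (xh i s + r s ^ (i - 1) * f i (x 1 s) - x i s) / r s ^ (i - 1))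
      (r t * φd (x 1 t) * ((xh (i + 1) t + r t ^ i * f (i + 1) (x 1 t) - x (i + 1) t) / r t ^ i) -
        r t * g i (x 1 t) * ((xh 2 t + r t * f 2 (x 1 t) - x 2 t) / r t) -
        ((i : ℝ) - 1) * (rdot / r t) *
          ((xh i t + r t ^ (i - 1) * f i (x 1 t) - x i t) / r t ^ (i - 1)) -
        Φi t / r t ^ (i - 1) +
        g i (x 1 t) * Φ1 t / φ12 (x 1 t)) t := by
  have hc : Continuous fun p => g i p / φ12 p := hgi.div hφ12 hφ12ne
  have hfd : HasDerivAt (f i) (g i (x 1 t) / φ12 (x 1 t)) (x 1 t) := by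
    rw [funext (hf i)]
    exact intervalIntegral.integral_hasDerivAt_right (hc.intervalIntegrable _ _)
      (hc.stronglyMeasurableAtFilter _ _) hc.continuousAt
  have hfx : HasDerivAt (fun s => f i (x 1 s))
      (g i (x 1 t) / φ12 (x 1 t) * (φ12 (x 1 t) * x 2 t + Φ1 t)) t := hfd.comp t hx1
  have hne : r t ≠ 0 := hrpos.ne'
  have hφ := hφ12ne (x 1 t)
  have hpow : HasDerivAt (fun s => r s ^ (i - 1))
      (((i : ℝ) - 1) * r t ^ (i - 2) * rdot) t := by
    have h := hr.fun_pow (i - 1)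
    rwa [Nat.cast_sub (by omega), Nat.cast_one, Nat.sub_sub] at h
  have key := ((hxhi.fun_add (hpow.fun_mul hfx)).fun_sub hxi).fun_div hpow (pow_ne_zero _ hne)
  refine key.congr_deriv ?_
  -- Writing `i = k + 2` removes the truncated subtractions from the exponents.
  obtain ⟨k, rfl⟩ := Nat.exists_eq_add_of_le' hi
  simp only [show k + 2 - 1 = k + 1 from rfl, show k + 2 - 2 = k from rfl]
  field_simp
  ring
end

section
/- Let n ≥ 3 be an integer. Let φ_{(1,2)}, g_n: ℝ → ℝ be continuous with φ_{(1,2)}(s) ≠ 0 for all s, and define f_n(s) = ∫₀^s g_n(π)/φ_{(1,2)}(π) dπ and f₂(s) = ∫₀^s g₂(π)/φ_{(1,2)}(π) dπ for a continuous g₂. Let r, x₁, x₂, x_n, x̂₂, x̂_n, Φ₁, m, ũ: ℝ → ℝ be functions of time such that at a time instant t: r is differentiable with derivative ṙ(t) and r(t) > 0; x₁ is differentiable with dx₁/dt = φ_{(1,2)}(x₁(t)) x₂(t) + Φ₁(t); x_n is differentiable with dx_n/dt = m(t); and x̂_n is differentiable with dx̂_n/dt = ũ(t) − r(t)^{n−1}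 g_n(x₁(t))[x̂₂(t) + r(t) f₂(x₁(t))] − (n−1) ṙ(t) r(t)^{n−2} f_n(x₁(t)). Define e_j = x̂_j + r^{j−1} f_j(x₁) − x_j and ε_j = e_j / r^{j−1} for j ∈ {2, n}, and u_d(t) = m(t) − ũ(t). Then ε_n is differentiable at t with dε_n/dt = −r(t) g_n(x₁(t)) ε₂(t) − (n−1)(ṙ(t)/r(t)) ε_n(t) + g_n(x₁(t)) Φ₁(t)/φ_{(1,2)}(x₁(t)) − u_d(t)/r(t)^{n−1}. -/
/-!
By the fundamental theorem of calculus `f_n' = g_n / φ_{(1,2)}`, so the chain rule along `x₁`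
gives `d/dt f_n(x₁) = g_n(x₁) (x₂ + Φ₁ / φ_{(1,2)}(x₁))`. The product and quotient rules then
differentiate `ε_n`, and what remains is a field identity, valid since `r(t)` and
`φ_{(1,2)}(x₁(t))` are nonzero.
-/

/-- last row of the scaled observer error dynamics: with
`ε_j = (x̂_j + r^{j−1} f_j(x₁) − x_j)/r^{j−1}`, `u_d = m − ũ`, and the given plant/observer
equations, `ε̇_n = −r g_n(x₁) ε₂ − (n−1)(ṙ/r) ε_n + g_n(x₁) Φ₁/φ_{(1,2)}(x₁) − u_d/r^{n−1}`. -/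
theorem scaled_observer_error_dynamics_last_row (n : ℕ) (hn : 3 ≤ n)
    (φ12 : ℝ → ℝ) (g : ℕ → ℝ → ℝ)
    (hφ12 : Continuous φ12) (hφ12ne : ∀ s, φ12 s ≠ 0)
    (hg2 : Continuous (g 2)) (hgn : Continuous (g n))
    (f : ℕ → ℝ → ℝ) (hf : ∀ j s, f j s = ∫ p in (0:ℝ)..s, g j p / φ12 p)
    (x xh : ℕ → ℝ → ℝ) (r Φ1 m utld : ℝ → ℝ) (t rdot : ℝ)
    (hr : HasDerivAt r rdot t) (hrpos : 0 < r t)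
    (hx1 : HasDerivAt (x 1) (φ12 (x 1 t) * x 2 t + Φ1 t) t)
    (hxn : HasDerivAt (x n) (m t) t)
    (hxhn : HasDerivAt (xh n)
      (utld t - r t ^ (n - 1) * g n (x 1 t) * (xh 2 t + r t * f 2 (x 1 t)) -
        ((n : ℝ) - 1) * rdot * r t ^ (n - 2) * f n (x 1 t)) t) :
    HasDerivAt (fun s => (xh n s + r s ^ (n - 1) * f n (x 1 s) - x n s) / r s ^ (n - 1))
      (-(r t) * g n (x 1 t) * ((xh 2 t + r t * f 2 (x 1 t) - x 2 t) / r t) -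
        ((n : ℝ) - 1) * (rdot / r t) *
          ((xh n t + r t ^ (n - 1) * f n (x 1 t) - x n t) / r t ^ (n - 1)) +
        g n (x 1 t) * Φ1 t / φ12 (x 1 t) -
        (m t - utld t) / r t ^ (n - 1)) t := by
  have hfn : HasDerivAt (f n) (g n (x 1 t) / φ12 (x 1 t)) (x 1 t) := by
    have hc : Continuous fun p => g n p / φ12 p := hgn.div hφ12 hφ12ne
    rw [show f n = fun s => ∫ p in (0:ℝ)..s, g n p / φ12 p from funext (hf n)]
    exact intervalIntegral.integral_hasDerivAt_right (hc.intervalIntegrable _ _)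
      hc.aestronglyMeasurable.stronglyMeasurableAtFilter hc.continuousAt
  have hfx : HasDerivAt (fun s => f n (x 1 s)) _ t := hfn.comp t hx1
  have hpow : HasDerivAt (fun s => r s ^ (n - 1)) _ t := hr.fun_pow (n - 1)
  have hr0 : r t ≠ 0 := hrpos.ne'
  have hφ0 := hφ12ne (x 1 t)
  refine (((hxhn.fun_add (hpow.fun_mul hfx)).fun_sub hxn).fun_div hpow
    (pow_ne_zero _ hr0)).congr_deriv ?_
  -- Writing `n = k + 2` removes the truncated subtractions from the exponents.
  obtain ⟨k, rfl⟩ : ∃ k, n = k + 2 := ⟨n - 2, by omega⟩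
  simp only [show k + 2 - 1 = k + 1 by omega, show k + 1 - 1 = k by omega,
    show k + 2 - 2 = k by omega]
  -- The two `ṙ r^(n-2) f_n` terms cancel, and `φ12 * x₂` from `ẋ₁` completes `e₂`.
  push_cast
  field_simp
  ring
end

section
/- Let n ≥ 3. Let φ_{(1,2)}, φ_{(2,3)}, g₂, g₃, ϑ₁: ℝ → ℝ with φ_{(1,2)} continuous and nonvanishing, g₂, g₃ continuous, and ϑ₁ continuously differentiable; define f_j(s) = ∫₀^s g_j(π)/φ_{(1,2)}(π) dπ for j = 2,3 and ϑ(x₁,θ̂) = θ̂ x₁ ϑ₁(x₁). Let r, x₁, x₂, x₃, x̂₂, x̂₃, θ̂, Φ₁, Φ₂: ℝ → ℝ be such that at a time t: r and θ̂ are differentiable with derivatives ṙ(t), θ̂̇(t) and r(t) > 0; dx₁/dt = φ_{(1,2)}(x₁)x₂ + Φ₁(t); dx₂/dt = φ_{(2,3)}(x₁)x₃ + Φ₂(t); and dx̂₂/dt = φ_{(2,3)}(x₁)[x̂₃ + r² f₃(x₁)] − r g₂(x₁)[x̂₂ + r f₂(x₁)] − ṙ f₂(x₁). Define ε₂ = (x̂₂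 + r f₂(x₁) − x₂)/r, ϖ₂ = (x̂₂ + r f₂(x₁) + ϑ(x₁,θ̂))/r, ε₃ = (x̂₃ + r² f₃(x₁) − x₃)/r², ϖ₃ = (x̂₃ + r² f₃(x₁))/r². Then ϖ₂ is differentiable at t with dϖ₂/dt = r φ_{(2,3)}(x₁) ϖ₃ − (ṙ/r) ϖ₂ − r g₂(x₁) ε₂ + g₂(x₁) Φ₁(t)/φ_{(1,2)}(x₁) + Ψ(t), where Ψ(t) = (∂ϑ/∂x₁)(x₁,θ̂) φ_{(1,2)}(x₁)(ϖ₂ − ε₂) + (1/r)(∂ϑ/∂x₁)(x₁,θ̂)[Φ₁(t) − φ_{(1,2)}(x₁)ϑ(x₁,θ̂)] + (1/r)(∂ϑ/∂θ̂)(x₁,θ̂) θ̂̇(t), with ∂ϑ/∂θ̂ = x₁ϑ₁(x₁) and ∂ϑ/∂x₁ = θ̂(ϑ₁(x₁) + x₁ϑ₁'(x₁)). -/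
/-!
Differentiate the quotient defining `ϖ₂` by the product, quotient and chain rules, with
`f₂' = g₂ / φ₁₂` from the fundamental theorem of calculus; substituting the dynamics of `x₁` and
`x̂₂`, the claim becomes a rational identity valid since `r t` and `φ₁₂ (x₁ t)` are nonzero.
-/

/-- first component of the scaled estimate dynamics: with
`ϖ₂ = (x̂₂ + r f₂(x₁) + ϑ(x₁,θ̂))/r`, `ϑ(x₁,θ̂) = θ̂ x₁ ϑ₁(x₁)`,
`ε₂ = (x̂₂ + r f₂(x₁) − x₂)/r`, `ϖ₃ = (x̂₃ + r² f₃(x₁))/r²`, one has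
`ϖ̇₂ = r φ_{(2,3)}(x₁) ϖ₃ − (ṙ/r) ϖ₂ − r g₂(x₁) ε₂ + g₂(x₁) Φ₁/φ_{(1,2)}(x₁) + Ψ`, where
`Ψ = ϑ_{x₁} φ_{(1,2)}(x₁)(ϖ₂ − ε₂) + (1/r) ϑ_{x₁}[Φ₁ − φ_{(1,2)}(x₁)ϑ] + (1/r) ϑ_{θ̂} θ̂̇`,
with `ϑ_{θ̂} = x₁ϑ₁(x₁)` and `ϑ_{x₁} = θ̂(ϑ₁(x₁) + x₁ϑ₁'(x₁))`. -/
theorem scaled_estimate_dynamics_first_component (n : ℕ) (hn : 3 ≤ n)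
    (φ12 φ23 : ℝ → ℝ) (g : ℕ → ℝ → ℝ) (ϑ1 : ℝ → ℝ)
    (hφ12 : Continuous φ12) (hφ12ne : ∀ s, φ12 s ≠ 0)
    (hg2 : Continuous (g 2)) (hg3 : Continuous (g 3))
    (hϑ1 : ContDiff ℝ 1 ϑ1)
    (f : ℕ → ℝ → ℝ) (hf : ∀ j s, f j s = ∫ p in (0:ℝ)..s, g j p / φ12 p)
    (x xh : ℕ → ℝ → ℝ) (r θh Φ1 Φ2 : ℝ → ℝ) (t rdot θhdot : ℝ)
    (hr : HasDerivAt r rdot t) (hθh : HasDerivAt θh θhdot t) (hrpos : 0 < r t)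
    (hx1 : HasDerivAt (x 1) (φ12 (x 1 t) * x 2 t + Φ1 t) t)
    (hx2 : HasDerivAt (x 2) (φ23 (x 1 t) * x 3 t + Φ2 t) t)
    (hxh2 : HasDerivAt (xh 2)
      (φ23 (x 1 t) * (xh 3 t + r t ^ 2 * f 3 (x 1 t)) -
        r t * g 2 (x 1 t) * (xh 2 t + r t * f 2 (x 1 t)) - rdot * f 2 (x 1 t)) t) :
    HasDerivAt (fun s => (xh 2 s + r s * f 2 (x 1 s) + θh s * x 1 s * ϑ1 (x 1 s)) / r s)
      (r t * φ23 (x 1 t) * ((xh 3 t + r t ^ 2 * f 3 (x 1 t)) / r t ^ 2) -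
        (rdot / r t) * ((xh 2 t + r t * f 2 (x 1 t) + θh t * x 1 t * ϑ1 (x 1 t)) / r t) -
        r t * g 2 (x 1 t) * ((xh 2 t + r t * f 2 (x 1 t) - x 2 t) / r t) +
        g 2 (x 1 t) * Φ1 t / φ12 (x 1 t) +
        (θh t * (ϑ1 (x 1 t) + x 1 t * deriv ϑ1 (x 1 t)) * φ12 (x 1 t) *
            ((xh 2 t + r t * f 2 (x 1 t) + θh t * x 1 t * ϑ1 (x 1 t)) / r t -
              (xh 2 t + r t * f 2 (x 1 t) - x 2 t) / r t) +
          (1 / r t) * (θh t * (ϑ1 (x 1 t) + x 1 t * deriv ϑ1 (x 1 t))) *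
            (Φ1 t - φ12 (x 1 t) * (θh t * x 1 t * ϑ1 (x 1 t))) +
          (1 / r t) * (x 1 t * ϑ1 (x 1 t)) * θhdot)) t := by
  have hr0 : r t ≠ 0 := hrpos.ne'
  have hφ0 : φ12 (x 1 t) ≠ 0 := hφ12ne _
  -- Fundamental theorem of calculus: `f₂' = g₂ / φ₁₂`, the integrand being continuous.
  have hf2 : HasDerivAt (f 2) (g 2 (x 1 t) / φ12 (x 1 t)) (x 1 t) := by
    have hc : Continuous fun p => g 2 p / φ12 p := hg2.div hφ12 hφ12ne
    rw [show f 2 = fun s => ∫ p in (0:ℝ)..s, g 2 p / φ12 p from funext (hf 2)]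
    exact intervalIntegral.integral_hasDerivAt_right (hc.intervalIntegrable _ _)
      (hc.stronglyMeasurableAtFilter _ _) hc.continuousAt
  have hϑ : HasDerivAt ϑ1 (deriv ϑ1 (x 1 t)) (x 1 t) :=
    ((hϑ1.differentiable one_ne_zero) _).hasDerivAt
  have hf2x : HasDerivAt (fun s => f 2 (x 1 s)) _ t := hf2.comp t hx1
  have hϑx : HasDerivAt (fun s => ϑ1 (x 1 s)) _ t := hϑ.comp t hx1
  have key := ((hxh2.fun_add (hr.fun_mul hf2x)).fun_add
    ((hθh.fun_mul hx1).fun_mul hϑx)).fun_div hr hr0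
  -- In the numerator the terms `± ṙ f₂(x₁)` cancel, and `ϖ₂ - ε₂ = (x₂ + ϑ) / r`.
  refine key.congr_deriv ?_
  field_simp
  ring
end

section
/- Let n ≥ 3 be an integer. Under the setting of the scaled observer error dynamics (plant equations dx₁/dt = φ_{(1,2)}(x₁)x₂ + Φ₁(t) and dx_n/dt = m(t); observer equation dx̂_n/dt = ũ(t) − r^{n−1} g_n(x₁)[x̂₂ + r f₂(x₁)] − (n−1)ṙ r^{n−2} f_n(x₁); f_j(s) = ∫₀^s g_j(π)/φ_{(1,2)}(π) dπ with φ_{(1,2)} continuous nonvanishing and g₂, g_n continuous; r differentiable with r(t) > 0), suppose that ũ(t) = −r(t)^n Σ_{j=2}^n k_j(x₁(t)) ϖ_j(t), where ϖ_j for 3 ≤ j ≤ n are the scaled estimates (x̂_j + r^{j−1}f_j(x₁))/r^{j−1}, ϖ₂ = (x̂₂ + r f₂(x₁) + ϑ(x₁,θ̂))/r, and k₂,…,k_n: ℝ → ℝ are given functions. Define ε₂ = (x̂₂ + r f₂(x₁) − x₂)/r, ϖ_n = (x̂_n + r^{n−1} f_n(x₁))/r^{n−1}, and u_d(t) = m(t)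 − ũ(t). Then ϖ_n is differentiable at t with dϖ_n/dt = −r(t) Σ_{j=2}^n k_j(x₁(t)) ϖ_j(t) − (n−1)(ṙ(t)/r(t)) ϖ_n(t) − r(t) g_n(x₁(t)) ε₂(t) + g_n(x₁(t)) Φ₁(t)/φ_{(1,2)}(x₁(t)) + u_d(t)/r(t)^{n−1}... specifically, dϖ_n/dt = dε_n/dt + d(x_n/r^{n−1})/dt equals −r g_n(x₁)ε₂ − (n−1)(ṙ/r)ϖ_n + g_n(x₁)Φ₁/φ_{(1,2)}(x₁) − r Σ_{j=2}^n k_j(x₁) ϖ_j. -/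
/-!
By the fundamental theorem of calculus and the chain rule, `f_n ∘ x₁` has derivative
`(g_n(x₁) / φ₁₂(x₁)) (φ₁₂(x₁) x₂ + Φ₁)`. The quotient rule then gives the derivative of `ϖ_n`: the
observer's correction `-(n-1) ṙ r^{n-2} f_n(x₁)` cancels the derivative of the factor `r^{n-1}` in
`r^{n-1} f_n(x₁)`, and the nominal control contributes `ũ / r^{n-1} = -r ∑ k_j ϖ_j`. Working directly
with `x̂_n` rather than through `ε_n + x_n / r^{n-1}`, the mismatch `m - ũ` never appears.
-/

/-- last component of the scaled estimate dynamics: with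
`ϖ_n = (x̂_n + r^{n−1} f_n(x₁))/r^{n−1}`, `ε₂ = (x̂₂ + r f₂(x₁) − x₂)/r`, the scaled estimates
`ϖ_j` as in the controller, and the nominal control `ũ = −rⁿ Σ_{j=2}^n k_j(x₁) ϖ_j`, one has
`ϖ̇_n = −r Σ_{j=2}^n k_j(x₁) ϖ_j − (n−1)(ṙ/r) ϖ_n − r g_n(x₁) ε₂ + g_n(x₁) Φ₁/φ_{(1,2)}(x₁)`. -/
theorem scaled_estimate_dynamics_last_component (n : ℕ) (hn : 3 ≤ n)
    (φ12 : ℝ → ℝ) (g k : ℕ → ℝ → ℝ) (ϑ : ℝ → ℝ → ℝ)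
    (hφ12 : Continuous φ12) (hφ12ne : ∀ s, φ12 s ≠ 0)
    (hg2 : Continuous (g 2)) (hgn : Continuous (g n))
    (f : ℕ → ℝ → ℝ) (hf : ∀ j s, f j s = ∫ p in (0:ℝ)..s, g j p / φ12 p)
    (x xh : ℕ → ℝ → ℝ) (r θh Φ1 m utld : ℝ → ℝ) (ϖ : ℕ → ℝ → ℝ) (t rdot : ℝ)
    (hr : HasDerivAt r rdot t) (hrpos : 0 < r t)
    (hx1 : HasDerivAt (x 1) (φ12 (x 1 t) * x 2 t + Φ1 t) t)
    (hxn : HasDerivAt (x n) (m t) t)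
    (hxhn : HasDerivAt (xh n)
      (utld t - r t ^ (n - 1) * g n (x 1 t) * (xh 2 t + r t * f 2 (x 1 t)) -
        ((n : ℝ) - 1) * rdot * r t ^ (n - 2) * f n (x 1 t)) t)
    (hϖ2 : ∀ s, ϖ 2 s = (xh 2 s + r s * f 2 (x 1 s) + ϑ (x 1 s) (θh s)) / r s)
    (hϖj : ∀ j, 3 ≤ j → j ≤ n → ∀ s, ϖ j s = (xh j s + r s ^ (j - 1) * f j (x 1 s)) / r s ^ (j - 1))
    (hutld : utld t = -(r t ^ n) * ∑ j ∈ Finset.Icc 2 n, k j (x 1 t) * ϖ j t) :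
    HasDerivAt (fun s => (xh n s + r s ^ (n - 1) * f n (x 1 s)) / r s ^ (n - 1))
      ((-(r t) * ∑ j ∈ Finset.Icc 2 n, k j (x 1 t) * ϖ j t) -
        ((n : ℝ) - 1) * (rdot / r t) * ((xh n t + r t ^ (n - 1) * f n (x 1 t)) / r t ^ (n - 1)) -
        r t * g n (x 1 t) * ((xh 2 t + r t * f 2 (x 1 t) - x 2 t) / r t) +
        g n (x 1 t) * Φ1 t / φ12 (x 1 t)) t := by
  have hf' : HasDerivAt (f n) (g n (x 1 t) / φ12 (x 1 t)) (x 1 t) := by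
    have hc : Continuous fun p => g n p / φ12 p := hgn.div hφ12 hφ12ne
    rw [funext (hf n)]
    exact (hc.integral_hasStrictDerivAt 0 (x 1 t)).hasDerivAt
  have hfx : HasDerivAt (fun s => f n (x 1 s))
      (g n (x 1 t) / φ12 (x 1 t) * (φ12 (x 1 t) * x 2 t + Φ1 t)) t := hf'.comp t hx1
  have hr0 : r t ≠ 0 := hrpos.ne'
  have hφ0 := hφ12ne (x 1 t)
  have hpow : HasDerivAt (fun s => r s ^ (n - 1)) (((n : ℝ) - 1) * r t ^ (n - 2) * rdot) t := by
    have h := hr.fun_pow (n - 1)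
    rwa [Nat.cast_sub (by omega), Nat.cast_one, Nat.sub_sub] at h
  refine ((hxhn.fun_add (hpow.fun_mul hfx)).fun_div hpow (pow_ne_zero _ hr0)).congr_deriv ?_
  rw [hutld]
  generalize ∑ j ∈ Finset.Icc 2 n, k j (x 1 t) * ϖ j t = S
  -- Express all powers of `r` through `r ^ (n - 2)`, removing the truncated subtractions.
  have h1 : r t ^ (n - 1) = r t ^ (n - 2) * r t := by
    rw [← pow_succ]; congr 1; omega
  have h2 : r t ^ n = r t ^ (n - 2) * r t ^ 2 := by
    rw [← pow_add]; congr 1; omega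
  have hR : r t ^ (n - 2) ≠ 0 := pow_ne_zero _ hr0
  rw [h1, h2]
  generalize r t ^ (n - 2) = R at hR ⊢
  field_simp
  ring
end
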